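/- arXiv:1411.1191 — 5 statements merged into one kernel-verified Lean document; each statement's English description precedes it below -/
import Mathlib

section
/- For every integer n ≥ 1 there exists a polynomial P with rational coefficients of degree 2n such that for every integer k ≥ 2, Σ_{θ=1}^{k-1} 1/sin^(2n)(πθ/k) = P(k). -/
open Real

/-!
For `ω` a primitive `k`-th root of unity put `u_θ = 1 / (1 - ω ^ θ)`, `0 < θ < k`. Factoring
`(X + 1) ^ k - X ^ k = k * ∏ (X + u_θ)` shows that the `j`-th elementary symmetric function of the
`u_θ` is `k.choose (j + 1) / k`, a polynomial in `k` of degree `j`, so by Newton's identities every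
power sum `∑ u_θ ^ r` with `r > 0` is a polynomial in `k` of degree at most `r`. For
`ω = exp (2πi / k)` one has `1 / sin (πθ / k) ^ 2 = 4 * u_θ * (1 - u_θ)`, which makes the cosecant
sum a polynomial in `k` of degree at most `2n`. The degree is attained because the term `θ = 1`
alone is at least `(k / π) ^ (2n)`.
-/

section Polynomials

open Polynomial

lemma le_degree_of_frequently_mul_pow_le_eval {𝕜 : Type*} [NormedField 𝕜] [LinearOrder 𝕜]
    [IsStrictOrderedRing 𝕜] [OrderTopology 𝕜] {P : 𝕜[X]} {c : 𝕜} (hc : 0 < c) {d : ℕ}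
    (h : ∃ᶠ x in Filter.atTop, c * x ^ d ≤ P.eval x) : (d : WithBot ℕ) ≤ P.degree := by
  by_contra! degree_lt
  rw [← degree_X_pow (R := 𝕜)] at degree_lt
  have ratio_lt := (div_tendsto_atTop_zero_of_degree_lt P (X ^ d) degree_lt).eventually_lt_const hc
  refine h ?_
  filter_upwards [ratio_lt, Filter.eventually_gt_atTop 0] with x ratio_lt_c x_pos
  rw [eval_pow, eval_X, div_lt_iff₀ (pow_pos x_pos d)] at ratio_lt_c
  exact ratio_lt_c.not_ge

lemma aeval_natCast_eq_ratCast_eval {K : Type*} [DivisionRing K] [CharZero K] (P : ℚ[X]) (k : ℕ) :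
    aeval (k : K) P = ((P.eval (k : ℚ) : ℚ) : K) := by
  rw [← map_natCast (algebraMap ℚ K), aeval_algebraMap_apply_eq_algebraMap_eval, eq_ratCast]

end Polynomials

section PowerSums

open Polynomial

variable {R A ι : Type*} [CommRing R] [CommRing A] [Algebra R A]

lemma sum_map_pow_eq_mul_esymm_sub_sum (s : Multiset A) {r : ℕ} (hr : 0 < r) :
    (s.map (· ^ r)).sum = (-1) ^ (r + 1) * r * s.esymm r -
      ∑ a ∈ Finset.HasAntidiagonal.antidiagonal r with a.1 ∈ Set.Ioo 0 r,
        (-1) ^ a.1 * s.esymm a.1 * (s.map (· ^ a.2)).sum := by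
  classical
  have aeval_esymm (j : ℕ) :
      MvPolynomial.aeval (fun x : s ↦ (x : A)) (MvPolynomial.esymm s ℤ j) = s.esymm j := by
    rw [MvPolynomial.aeval_esymm_eq_multiset_esymm, Multiset.map_univ_coe]
  have aeval_psum (j : ℕ) :
      MvPolynomial.aeval (fun x : s ↦ (x : A)) (MvPolynomial.psum s ℤ j) =
        (s.map (· ^ j)).sum := by
    rw [← Multiset.map_univ_comp_coe]
    simp only [MvPolynomial.psum, map_sum, map_pow, MvPolynomial.aeval_X]
    rfl
  have newton := congrArg (MvPolynomial.aeval fun x : s ↦ (x : A))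
    (MvPolynomial.psum_eq_mul_esymm_sub_sum s ℤ r hr)
  simpa only [map_sub, map_mul, map_sum, map_pow, map_neg, map_one, map_natCast,
    aeval_esymm, aeval_psum] using newton

variable {s : ι → Multiset A} {t : ι → A} {E : ℕ → R[X]}

theorem exists_sum_map_pow_eq_aeval (natDegree_E : ∀ j, (E j).natDegree ≤ j)
    (esymm_eq : ∀ i j, (s i).esymm j = aeval (t i) (E j)) {r : ℕ} (hr : 0 < r) :
    ∃ P : R[X], P.natDegree ≤ r ∧ ∀ i, ((s i).map (· ^ r)).sum = aeval (t i) P := by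
  induction r using Nat.strong_induction_on with
  | _ r ih =>
  choose! Q natDegree_Q sum_eq_Q using ih
  refine ⟨C ((-1) ^ (r + 1) * (r : R)) * E r -
    ∑ a ∈ Finset.HasAntidiagonal.antidiagonal r with a.1 ∈ Set.Ioo 0 r,
      C ((-1) ^ a.1) * (E a.1 * Q a.2), ?_, fun i ↦ ?_⟩
  · refine (natDegree_sub_le _ _).trans <|
      max_le ((natDegree_C_mul_le _ _).trans (natDegree_E r))
        (natDegree_sum_le_of_forall_le _ _ fun a ha ↦ ?_)
    obtain ⟨add_eq, fst_pos, fst_lt⟩ : a.1 + a.2 = r ∧ 0 < a.1 ∧ a.1 < r := by simpa using ha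
    calc (C ((-1) ^ a.1) * (E a.1 * Q a.2)).natDegree
        ≤ (E a.1 * Q a.2).natDegree := natDegree_C_mul_le _ _
      _ ≤ a.1 + a.2 :=
        natDegree_mul_le_of_le (natDegree_E _) (natDegree_Q _ (by lia) (by lia))
      _ = r := add_eq
  · rw [sum_map_pow_eq_mul_esymm_sub_sum _ hr]
    simp only [map_sub, map_mul, map_sum, map_pow, map_neg, map_one, map_natCast, esymm_eq,
      ← mul_assoc]
    congr 1
    refine Finset.sum_congr rfl fun a ha ↦ ?_
    obtain ⟨add_eq, fst_pos, fst_lt⟩ : a.1 + a.2 = r ∧ 0 < a.1 ∧ a.1 < r := by simpa using ha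
    rw [sum_eq_Q a.2 (by lia) (by lia)]

theorem exists_sum_map_aeval_eq_aeval (natDegree_E : ∀ j, (E j).natDegree ≤ j)
    (esymm_eq : ∀ i j, (s i).esymm j = aeval (t i) (E j)) {q : R[X]} (hq : q.coeff 0 = 0) :
    ∃ P : R[X], P.natDegree ≤ q.natDegree ∧
      ∀ i, ((s i).map fun x ↦ aeval x q).sum = aeval (t i) P := by
  choose! P natDegree_P sum_eq_P using
    fun (r : ℕ) (hr : 0 < r) ↦ exists_sum_map_pow_eq_aeval natDegree_E esymm_eq hr
  refine ⟨∑ r ∈ Finset.range q.natDegree, C (q.coeff (r + 1)) * P (r + 1), ?_, fun i ↦ ?_⟩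
  · refine natDegree_sum_le_of_forall_le _ _ fun r hr ↦ (natDegree_C_mul_le _ _).trans ?_
    exact (natDegree_P _ r.succ_pos).trans (Finset.mem_range.mp hr)
  · have aeval_q (x : A) :
        aeval x q =
          ∑ r ∈ Finset.range q.natDegree, algebraMap R A (q.coeff (r + 1)) * x ^ (r + 1) := by
      rw [aeval_eq_sum_range, Finset.sum_range_succ', hq, zero_smul, add_zero]
      simp only [Algebra.smul_def]
    simp only [aeval_q, Multiset.sum_map_sum, Multiset.sum_map_mul_left,
      sum_eq_P _ (Nat.succ_pos _), map_sum, map_mul, aeval_C]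

end PowerSums

section RootsOfUnity

open Polynomial

variable {R : Type*} [CommRing R] [IsDomain R] {ω : R} {k : ℕ}

lemma pow_sub_pow_eq_mul_prod_Ico (hω : IsPrimitiveRoot ω k) (hk : 0 < k) (x y : R) :
    x ^ k - y ^ k = (x - y) * ∏ θ ∈ Finset.Ico 1 k, (x - ω ^ θ * y) := by
  have : NeZero k := ⟨hk.ne'⟩
  have prod_range : ∏ θ ∈ Finset.range k, (x - ω ^ θ * y) =
      ∏ ζ ∈ nthRootsFinset k (1 : R), (x - ζ * y) := by
    refine Finset.prod_nbij (ω ^ ·) (fun θ _ ↦ ?_) (fun θ hθ η hη ↦ ?_) (fun ζ hζ ↦ ?_)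
      fun _ _ ↦ rfl
    · rw [mem_nthRootsFinset hk, pow_right_comm, hω.pow_eq_one, one_pow]
    · exact hω.pow_inj (Finset.mem_range.mp hθ) (Finset.mem_range.mp hη)
    · obtain ⟨θ, hθ, rfl⟩ := hω.eq_pow_of_pow_eq_one ((mem_nthRootsFinset hk 1).mp hζ)
      exact ⟨θ, Finset.mem_coe.mpr (Finset.mem_range.mpr hθ), rfl⟩
  rw [hω.pow_sub_pow_eq_prod_sub_mul x y hk, ← prod_range, Finset.prod_range_eq_mul_Ico _ hk,
    pow_zero, one_mul]

lemma prod_one_sub_pow_Ico (hω : IsPrimitiveRoot ω k) (hk : 0 < k) :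
    ∏ θ ∈ Finset.Ico 1 k, (1 - ω ^ θ) = k := by
  obtain ⟨m, rfl⟩ := Nat.exists_eq_add_one.mpr hk
  rw [Finset.prod_Ico_eq_prod_range, Nat.add_sub_cancel, Nat.cast_succ,
    ← hω.prod_one_sub_pow_eq_order]
  simp only [add_comm 1]

end RootsOfUnity

section UnitRootResolvents

open Polynomial

variable {K : Type*} [Field K] {ω : K} {k : ℕ}

/-- The numbers `1 / (1 - ω ^ θ)` for `0 < θ < k`. For `ω` a primitive `k`-th root of unity these
are the values of `1 / (1 - ζ)` at the nontrivial `k`-th roots of unity `ζ`. -/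
def unitRootResolvents (ω : K) (k : ℕ) : Multiset K :=
  (Finset.Ico 1 k).val.map fun θ ↦ (1 - ω ^ θ)⁻¹

lemma sum_map_unitRootResolvents {M : Type*} [AddCommMonoid M] (f : K → M) :
    ((unitRootResolvents ω k).map f).sum = ∑ θ ∈ Finset.Ico 1 k, f (1 - ω ^ θ)⁻¹ := by
  rw [unitRootResolvents, Multiset.map_map]
  rfl

lemma X_add_one_pow_sub_X_pow (hω : IsPrimitiveRoot ω k) (hk : 0 < k) :
    (X + 1 : K[X]) ^ k - X ^ k =
      C (k : K) * ((unitRootResolvents ω k).map fun u ↦ X + C u).prod := by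
  have hCω : IsPrimitiveRoot (C ω) k := hω.map_of_injective C_injective
  have factor_eq (θ : ℕ) (hθ : θ ∈ Finset.Ico 1 k) :
      (X + 1 - C ω ^ θ * X : K[X]) = C (1 - ω ^ θ) * (X + C (1 - ω ^ θ)⁻¹) := by
    obtain ⟨hθ_pos, hθ_lt⟩ := Finset.mem_Ico.mp hθ
    have one_sub_ne : 1 - ω ^ θ ≠ 0 :=
      sub_ne_zero.mpr (hω.pow_ne_one_of_pos_of_lt (Nat.ne_of_gt hθ_pos) hθ_lt).symm
    rw [mul_add, ← C_mul, mul_inv_cancel₀ one_sub_ne, C_sub, C_pow, C_1]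
    ring
  calc (X + 1 : K[X]) ^ k - X ^ k
      = ∏ θ ∈ Finset.Ico 1 k, (X + 1 - C ω ^ θ * X) := by
        rw [pow_sub_pow_eq_mul_prod_Ico hCω hk, add_sub_cancel_left, one_mul]
    _ = C (∏ θ ∈ Finset.Ico 1 k, (1 - ω ^ θ)) *
          ∏ θ ∈ Finset.Ico 1 k, (X + C (1 - ω ^ θ)⁻¹) := by
        rw [Finset.prod_congr rfl factor_eq, Finset.prod_mul_distrib, map_prod]
    _ = C (k : K) * ((unitRootResolvents ω k).map fun u ↦ X + C u).prod := by
        rw [prod_one_sub_pow_Ico hω hk, unitRootResolvents, Multiset.map_map]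
        rfl

lemma mul_esymm_unitRootResolvents (hω : IsPrimitiveRoot ω k) (hk : 0 < k) (j : ℕ) :
    k * (unitRootResolvents ω k).esymm j = k.choose (j + 1) := by
  have card_eq : (unitRootResolvents ω k).card = k - 1 := by simp [unitRootResolvents]
  rcases lt_or_ge j k with hj | hj
  · have coeff_eq := congrArg (coeff · (k - 1 - j)) (X_add_one_pow_sub_X_pow hω hk)
    simp only [coeff_sub, coeff_X_add_one_pow, coeff_X_pow, coeff_C_mul] at coeff_eq
    rw [Multiset.prod_X_add_C_coeff _ (by lia), card_eq, if_neg (by lia), sub_zero,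
      show k - 1 - (k - 1 - j) = j by lia, show k - 1 - j = k - (j + 1) by lia,
      Nat.choose_symm hj] at coeff_eq
    exact coeff_eq.symm
  · rw [Multiset.esymm, Multiset.powersetCard_eq_empty _ (by lia),
      Nat.choose_eq_zero_of_lt (by lia)]
    simp

/-- The polynomial of degree `j` whose value at a positive integer `k` is `k.choose (j + 1) / k`.
It is `X * (X - 1) * ⋯ * (X - j) / (j + 1)!` with the factor `X` removed. -/
noncomputable def chooseDivPoly (j : ℕ) : ℚ[X] :=
  C ((j + 1).factorial : ℚ)⁻¹ * (descPochhammer ℚ j).comp (X - 1)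

lemma natDegree_chooseDivPoly_le (j : ℕ) : (chooseDivPoly j).natDegree ≤ j := by
  refine (natDegree_C_mul_le _ _).trans (natDegree_comp_le.trans_eq ?_)
  rw [descPochhammer_natDegree, ← C_1, natDegree_X_sub_C, mul_one]

lemma mul_eval_chooseDivPoly (j k : ℕ) :
    k * (chooseDivPoly j).eval (k : ℚ) = k.choose (j + 1) := by
  rw [Nat.cast_choose_eq_descPochhammer_div, descPochhammer_succ_left, chooseDivPoly]
  simp only [eval_mul, eval_C, eval_X]
  ring

variable [CharZero K]

lemma esymm_unitRootResolvents (hω : IsPrimitiveRoot ω k) (hk : 0 < k) (j : ℕ) :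
    (unitRootResolvents ω k).esymm j = aeval (k : K) (chooseDivPoly j) := by
  refine mul_left_cancel₀ (Nat.cast_ne_zero.mpr hk.ne' : (k : K) ≠ 0) ?_
  rw [mul_esymm_unitRootResolvents hω hk, aeval_natCast_eq_ratCast_eval]
  exact_mod_cast (mul_eval_chooseDivPoly j k).symm

variable (K) in
theorem exists_sum_aeval_resolvent_eq_aeval {q : ℚ[X]} (hq : q.coeff 0 = 0) :
    ∃ P : ℚ[X], P.natDegree ≤ q.natDegree ∧ ∀ (k : ℕ) (ω : K), 0 < k → IsPrimitiveRoot ω k →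
      ∑ θ ∈ Finset.Ico 1 k, aeval (1 - ω ^ θ)⁻¹ q = aeval (k : K) P := by
  obtain ⟨P, natDegree_P, sum_eq⟩ := exists_sum_map_aeval_eq_aeval
    (s := fun i : {p : ℕ × K // 0 < p.1 ∧ IsPrimitiveRoot p.2 p.1} ↦
      unitRootResolvents i.1.2 i.1.1)
    (t := fun i ↦ (i.1.1 : K)) natDegree_chooseDivPoly_le
    (fun i ↦ esymm_unitRootResolvents i.2.2 i.2.1) hq
  refine ⟨P, natDegree_P, fun k ω hk hω ↦ ?_⟩
  rw [← sum_map_unitRootResolvents (aeval · q), sum_eq ⟨(k, ω), hk, hω⟩]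

end UnitRootResolvents

section CosecantSums

open Polynomial

-- At `sin z = 0` both sides vanish, by the convention `0⁻¹ = 0`.
lemma inv_sin_sq_eq (z : ℂ) :
    (Complex.sin z ^ 2)⁻¹ = 4 * ((1 - Complex.exp (2 * z * Complex.I))⁻¹ *
      (1 - (1 - Complex.exp (2 * z * Complex.I))⁻¹)) := by
  set w := Complex.exp (z * Complex.I) with hw
  have w_ne : w ≠ 0 := Complex.exp_ne_zero _
  have exp_eq : Complex.exp (2 * z * Complex.I) = w ^ 2 := by
    rw [hw, ← Complex.exp_nat_mul]
    ring_nf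
  have sin_sq : 4 * w ^ 2 * Complex.sin z ^ 2 = -(1 - w ^ 2) ^ 2 := by
    have two_sin : 2 * Complex.sin z = (w⁻¹ - w) * Complex.I := by
      rw [Complex.two_sin, neg_mul, Complex.exp_neg]
    calc 4 * w ^ 2 * Complex.sin z ^ 2 = w ^ 2 * (2 * Complex.sin z) ^ 2 := by ring
      _ = (w * w⁻¹ - w ^ 2) ^ 2 * Complex.I ^ 2 := by rw [two_sin]; ring
      _ = -(1 - w ^ 2) ^ 2 := by rw [mul_inv_cancel₀ w_ne, Complex.I_sq]; ring
  rw [exp_eq]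
  rcases eq_or_ne (1 - w ^ 2) 0 with h | h
  · have sin_eq : Complex.sin z = 0 := by simpa [h, w_ne] using sin_sq
    simp [h, sin_eq]
  · have sin_ne : Complex.sin z ≠ 0 := by
      intro sin_eq
      simp [sin_eq, h] at sin_sq
    field_simp
    linear_combination sin_sq

lemma one_div_sin_pow_eq_aeval (n k θ : ℕ) :
    ((1 / sin (π * θ / k) ^ (2 * n) : ℝ) : ℂ) =
      aeval (1 - Complex.exp (2 * π * Complex.I / k) ^ θ)⁻¹ ((4 * (X * (1 - X)) : ℚ[X]) ^ n) := by
  have exp_eq : Complex.exp (2 * π * Complex.I / k) ^ θ =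
      Complex.exp (2 * (π * θ / k : ℂ) * Complex.I) := by
    rw [← Complex.exp_nat_mul]
    ring_nf
  have aeval_eq (u : ℂ) : aeval u ((4 * (X * (1 - X)) : ℚ[X]) ^ n) = (4 * (u * (1 - u))) ^ n := by
    simp [map_ofNat]
  rw [aeval_eq, exp_eq, ← inv_sin_sq_eq, pow_mul, inv_pow]
  push_cast
  rw [one_div]

theorem exists_sum_one_div_sin_pow_eq_eval {n : ℕ} (hn : 1 ≤ n) :
    ∃ P : ℚ[X], P.natDegree ≤ 2 * n ∧ ∀ k : ℕ, 0 < k →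
      ∑ θ ∈ Finset.Ico 1 k, 1 / sin (π * θ / k) ^ (2 * n) = ((P.eval (k : ℚ) : ℚ) : ℝ) := by
  have coeff_zero : ((4 * (X * (1 - X)) : ℚ[X]) ^ n).coeff 0 = 0 := by
    simp [coeff_zero_eq_eval_zero, Nat.ne_zero_of_lt hn]
  have natDegree_le : ((4 * (X * (1 - X)) : ℚ[X]) ^ n).natDegree ≤ 2 * n := by
    have base_le : (4 * (X * (1 - X)) : ℚ[X]).natDegree ≤ 2 := by compute_degree
    exact (natDegree_pow_le_of_le n base_le).trans_eq (mul_comm n 2)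
  obtain ⟨P, natDegree_P, sum_eq⟩ := exists_sum_aeval_resolvent_eq_aeval ℂ coeff_zero
  refine ⟨P, natDegree_P.trans natDegree_le, fun k hk ↦ Complex.ofReal_injective ?_⟩
  rw [Complex.ofReal_sum, Finset.sum_congr rfl fun θ _ ↦ one_div_sin_pow_eq_aeval n k θ,
    sum_eq k _ hk (Complex.isPrimitiveRoot_exp k hk.ne'),
    aeval_natCast_eq_ratCast_eval, Complex.ofReal_ratCast]

lemma div_pi_pow_le_sum_one_div_sin_pow (n : ℕ) {k : ℕ} (hk : 2 ≤ k) :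
    (k / π) ^ (2 * n) ≤ ∑ θ ∈ Finset.Ico 1 k, 1 / sin (π * θ / k) ^ (2 * n) := by
  have k_gt_one : (1 : ℝ) < k := by exact_mod_cast hk
  have pi_div_pos : 0 < π / k := by positivity
  have sin_pos : 0 < sin (π / k) :=
    sin_pos_of_pos_of_lt_pi pi_div_pos (div_lt_self pi_pos k_gt_one)
  calc (k / π) ^ (2 * n) = 1 / (π / k) ^ (2 * n) := by rw [← one_div_pow, one_div_div]
    _ ≤ 1 / sin (π / k) ^ (2 * n) := by
        gcongr
        exact sin_le pi_div_pos.le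
    _ = 1 / sin (π * (1 : ℕ) / k) ^ (2 * n) := by rw [Nat.cast_one, mul_one]
    _ ≤ ∑ θ ∈ Finset.Ico 1 k, 1 / sin (π * θ / k) ^ (2 * n) :=
        Finset.single_le_sum (f := fun θ : ℕ ↦ 1 / sin (π * θ / k) ^ (2 * n))
          (fun θ _ ↦ by rw [pow_mul]; positivity) (Finset.mem_Ico.mpr ⟨le_rfl, hk⟩)

end CosecantSums

theorem stmt_5 (n : ℕ) (hn : 1 ≤ n) :
    ∃ P : Polynomial ℚ, P.degree = 2 * n ∧
      ∀ k : ℕ, 2 ≤ k →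
        ∑ θ ∈ Finset.Icc 1 (k - 1), 1 / Real.sin (π * θ / k) ^ (2 * n) =
          ((P.eval (k : ℚ) : ℚ) : ℝ) := by
  obtain ⟨P, natDegree_le, sum_eq⟩ := exists_sum_one_div_sin_pow_eq_eval hn
  have growth : ∃ᶠ x : ℝ in Filter.atTop,
      (1 / π) ^ (2 * n) * x ^ (2 * n) ≤ (P.map (algebraMap ℚ ℝ)).eval x := by
    refine tendsto_natCast_atTop_atTop.frequently (Filter.Eventually.frequently ?_)
    filter_upwards [Filter.eventually_ge_atTop 2] with k hk
    rw [← mul_pow, one_div_mul_eq_div, Polynomial.eval_natCast_map, eq_ratCast,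
      ← sum_eq k (by lia)]
    exact div_pi_pow_le_sum_one_div_sin_pow n hk
  have le_degree := le_degree_of_frequently_mul_pow_le_eval (by positivity) growth
  rw [Polynomial.degree_map] at le_degree
  refine ⟨P, ?_, fun k hk ↦ ?_⟩
  · exact_mod_cast (Polynomial.degree_le_of_natDegree_le natDegree_le).antisymm le_degree
  · rw [Finset.Icc_sub_one_right_eq_Ico_of_not_isMin (by simp; lia), sum_eq k (by lia)]
end

section
/- Let g ≥ 2 be an integer and p an odd prime with p > 2(g-1). Then the real number (p^(g-1)/2^(2g-1)) · Σ_{θ=1}^{p-1} 1/sin^(2g-2)(πθ/p) is a positive integer. (By Corollary 5.4 it equals the degree of the moduli stack of dormant indigenous bundles over the moduli stack of genus-g curves in characteristic p.) -/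
open Real

/-!
For `z = exp (2πiθ/n)` one has `n / (4 sin² (πθ/n)) = -z * (n / (1 - z)²)`, so the quantity in
question is half the sum of the `m`-th powers of these numbers over all `n`-th roots of unity
`z ≠ 1`, where `n = p` and `m = g - 1`. Because `1 / (1 - z)` is one and the same rational
polynomial in each such `z`, orthogonality of the powers of a primitive root makes this sum
rational. Because `n` is odd, `z ≠ 1` has order `d ≥ 3`, and `(1 - z)²` divides `d`, hence `n`, in
`ℤ[z]`, so every term is an algebraic integer. The symmetry `θ ↦ n - θ` exhibits half of the sum as
a sum over `1 ≤ θ ≤ (n - 1) / 2`, which is therefore both rational and an algebraic integer.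
-/

open Finset Polynomial

section RootsOfUnity

variable {R : Type*} [CommRing R] [IsDomain R] {n : ℕ}
  {A : Type*} [CommRing A] [Algebra A R]

lemma geom_sum_eq_zero_of_pow_eq_one {z : R} (hz : z ^ n = 1) (hz1 : z ≠ 1) :
    ∑ k ∈ range n, z ^ k = 0 := by
  have hmul : (z - 1) * ∑ k ∈ range n, z ^ k = 0 := by rw [mul_geom_sum, hz, sub_self]
  exact (mul_eq_zero.mp hmul).resolve_left (sub_ne_zero.mpr hz1)

lemma sum_range_pow_mem_range_algebraMap {z : R} (hz : z ^ n = 1) :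
    ∑ k ∈ range n, z ^ k ∈ (algebraMap A R).range := by
  by_cases h : z = 1
  · exact ⟨n, by simp [h]⟩
  · rw [geom_sum_eq_zero_of_pow_eq_one hz h]
    exact zero_mem _

lemma sum_range_aeval_pow_mem_range_algebraMap {ζ : R} (hζ : ζ ^ n = 1) (q : A[X]) :
    ∑ θ ∈ range n, aeval (ζ ^ θ) q ∈ (algebraMap A R).range := by
  have hswap : ∑ θ ∈ range n, aeval (ζ ^ θ) q =
      ∑ k ∈ range (q.natDegree + 1), algebraMap A R (q.coeff k) * ∑ θ ∈ range n, (ζ ^ k) ^ θ := by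
    simp only [aeval_eq_sum_range, Algebra.smul_def, mul_sum]
    rw [sum_comm]
    simp only [pow_right_comm ζ]
  rw [hswap]
  refine sum_mem fun k _ ↦ mul_mem ⟨q.coeff k, rfl⟩ (sum_range_pow_mem_range_algebraMap ?_)
  rw [pow_right_comm, hζ, one_pow]

lemma sum_Ico_one_aeval_pow_mem_range_algebraMap {ζ : R} (hn : 0 < n) (hζ : ζ ^ n = 1)
    (q : A[X]) :
    ∑ θ ∈ Ico 1 n, aeval (ζ ^ θ) q ∈ (algebraMap A R).range := by
  have hone : aeval (ζ ^ 0) q ∈ (algebraMap A R).range :=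
    ⟨q.eval 1, by rw [pow_zero, ← aeval_algebraMap_apply_eq_algebraMap_eval, map_one]⟩
  have hall := sum_range_aeval_pow_mem_range_algebraMap hζ q
  rw [sum_range_eq_add_Ico _ hn] at hall
  exact (add_mem_cancel_left hone).mp hall

lemma one_sub_mul_sum_geom_sum {z : R} (hz : z ^ n = 1) (hz1 : z ≠ 1) :
    (1 - z) * ∑ k ∈ range n, ∑ j ∈ range k, z ^ j = n := by
  calc (1 - z) * ∑ k ∈ range n, ∑ j ∈ range k, z ^ j
      = ∑ k ∈ range n, (1 - z ^ k) := by rw [mul_sum]; simp only [mul_neg_geom_sum]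
    _ = n := by simp [geom_sum_eq_zero_of_pow_eq_one hz hz1]

end RootsOfUnity

section Field

variable {K : Type*} [Field K] {n : ℕ}

lemma exists_aeval_eq_inv_one_sub {F : Type*} [Field F] [Algebra F K] (hn : (n : F) ≠ 0) :
    ∃ q : F[X], ∀ z : K, z ^ n = 1 → z ≠ 1 → aeval z q = (1 - z)⁻¹ := by
  refine ⟨C (n : F)⁻¹ * ∑ k ∈ range n, ∑ j ∈ range k, X ^ j, fun z hz hz1 ↦ ?_⟩
  have hnK : (n : K) ≠ 0 := by simpa using (map_ne_zero (algebraMap F K)).mpr hn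
  have hmul := one_sub_mul_sum_geom_sum hz hz1
  simp only [map_mul, map_sum, map_pow, aeval_C, aeval_X, map_inv₀, map_natCast]
  refine eq_inv_of_mul_eq_one_right ?_
  rw [mul_left_comm, hmul, inv_mul_cancel₀ hnK]

lemma isIntegral_natCast_div_one_sub_sq (hodd : Odd n) {z : K} (hz : z ^ n = 1) (hz1 : z ≠ 1) :
    IsIntegral ℤ ((n : K) / (1 - z) ^ 2) := by
  obtain ⟨c, hc⟩ := orderOf_dvd_of_pow_eq_one hz
  have horder : 2 < orderOf z := by
    have hne : orderOf z ≠ 1 := orderOf_eq_one_iff.not.mpr hz1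
    obtain ⟨k, hk⟩ := hodd.of_dvd_nat ⟨c, hc⟩
    omega
  obtain ⟨w, hw, hdvd⟩ := (IsPrimitiveRoot.orderOf z).self_sub_one_pow_dvd_order horder
  have hzint : IsIntegral ℤ z := (IsPrimitiveRoot.orderOf z).isIntegral (by omega)
  have hwint : IsIntegral ℤ w := adjoin_le_integralClosure hzint hw
  have hquot : (n : K) / (1 - z) ^ 2 = w * c := by
    rw [div_eq_iff (pow_ne_zero 2 (sub_ne_zero.mpr hz1.symm)), hc, Nat.cast_mul, hdvd]
    ring
  rw [hquot]
  exact hwint.mul (isIntegral_natCast c)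

lemma sum_neg_mul_div_one_sub_sq_pow_mem_range_algebraMap [CharZero K] {ζ : K} (hn : 0 < n)
    (hζ : IsPrimitiveRoot ζ n) (m : ℕ) :
    ∑ θ ∈ Ico 1 n, (-ζ ^ θ * (n / (1 - ζ ^ θ) ^ 2)) ^ m ∈ (algebraMap ℚ K).range := by
  obtain ⟨q, hq⟩ := exists_aeval_eq_inv_one_sub (K := K) (Nat.cast_ne_zero (R := ℚ).mpr hn.ne')
  have hterm : ∀ θ ∈ Ico 1 n, (-ζ ^ θ * (n / (1 - ζ ^ θ) ^ 2)) ^ m =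
      aeval (ζ ^ θ) ((-X * ((n : ℚ[X]) * q ^ 2)) ^ m) := by
    intro θ hθ
    have hroot : (ζ ^ θ) ^ n = 1 := by rw [pow_right_comm, hζ.pow_eq_one, one_pow]
    have hinv := hq _ hroot (hζ.pow_ne_one_of_pos_of_lt (by grind) (by grind))
    simp [hinv, div_eq_mul_inv]
  rw [sum_congr rfl hterm]
  exact sum_Ico_one_aeval_pow_mem_range_algebraMap hn hζ.pow_eq_one _

lemma exists_intCast_eq_of_isIntegral_of_mem_range [CharZero K] {x : K} (hint : IsIntegral ℤ x)
    (hrat : x ∈ (algebraMap ℚ K).range) : ∃ k : ℤ, x = k := by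
  obtain ⟨r, rfl⟩ := hrat
  rw [isIntegral_algebraMap_iff (algebraMap ℚ K).injective] at hint
  obtain ⟨k, rfl⟩ := IsIntegrallyClosed.isIntegral_iff.mp hint
  exact ⟨k, by simp⟩

end Field

lemma sum_Ico_one_eq_two_nsmul_of_symm {M : Type*} [AddCommMonoid M] (f : ℕ → M) (h : ℕ)
    (hf : ∀ k ∈ Ico 1 (h + 1), f (2 * h + 1 - k) = f k) :
    ∑ k ∈ Ico 1 (2 * h + 1), f k = 2 • ∑ k ∈ Ico 1 (h + 1), f k := by
  have hreflect : ∑ k ∈ Ico (h + 1) (2 * h + 1), f k = ∑ k ∈ Ico 1 (h + 1), f k := by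
    rw [← sum_congr rfl hf, sum_Ico_reflect f 1 (by omega)]
    congr 2; omega
  rw [← sum_Ico_consecutive f (by omega : 1 ≤ h + 1) (by omega), hreflect, two_nsmul]

lemma four_mul_sin_sq_eq_neg_one_sub_exp_sq_div (x : ℂ) :
    4 * Complex.sin x ^ 2 =
      -(1 - Complex.exp (2 * x * Complex.I)) ^ 2 / Complex.exp (2 * x * Complex.I) := by
  have hsq : Complex.exp (2 * x * Complex.I) = Complex.exp (x * Complex.I) ^ 2 := by
    rw [← Complex.exp_nat_mul]
    ring_nf
  have hne : Complex.exp (x * Complex.I) ≠ 0 := Complex.exp_ne_zero _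
  rw [Complex.sin, hsq, neg_mul, Complex.exp_neg]
  field_simp
  rw [Complex.I_sq]
  ring

/-- The number `n / (4 sin² (πθ/n))`, normalised so that it is an algebraic integer for odd `n`.
When `n ∣ θ` its value is `0`, by the convention for division. -/
noncomputable def scaledCscSq (n θ : ℕ) : ℝ :=
  n / (4 * sin (π * θ / n) ^ 2)

section ScaledCscSq

variable {n θ : ℕ}

lemma ofReal_scaledCscSq (n θ : ℕ) :
    (scaledCscSq n θ : ℂ) = -Complex.exp (2 * π * Complex.I / n) ^ θ *
      (n / (1 - Complex.exp (2 * π * Complex.I / n) ^ θ) ^ 2) := by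
  have hexp : Complex.exp (2 * π * Complex.I / n) ^ θ =
      Complex.exp (2 * (π * θ / n) * Complex.I) := by
    rw [← Complex.exp_nat_mul]
    ring_nf
  rw [hexp, scaledCscSq]
  push_cast
  rw [four_mul_sin_sq_eq_neg_one_sub_exp_sq_div, div_div_eq_mul_div, div_neg]
  ring

lemma scaledCscSq_pos (hpos : 0 < θ) (hlt : θ < n) : 0 < scaledCscSq n θ := by
  have hn : (0 : ℝ) < n := by exact_mod_cast hpos.trans hlt
  have hsin : 0 < sin (π * θ / n) := by
    apply sin_pos_of_pos_of_lt_pi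
    · positivity
    · rw [div_lt_iff₀ hn]
      gcongr
  unfold scaledCscSq
  positivity

lemma scaledCscSq_sub (hle : θ ≤ n) (hn : n ≠ 0) : scaledCscSq n (n - θ) = scaledCscSq n θ := by
  have hangle : π * ((n - θ : ℕ) : ℝ) / n = π - π * θ / n := by
    rw [Nat.cast_sub hle]
    field_simp
  rw [scaledCscSq, scaledCscSq, hangle, sin_pi_sub]

lemma sum_scaledCscSq_pow_eq_two_mul (h m : ℕ) :
    ∑ θ ∈ Ico 1 (2 * h + 1), scaledCscSq (2 * h + 1) θ ^ m =
      2 * ∑ θ ∈ Ico 1 (h + 1), scaledCscSq (2 * h + 1) θ ^ m := by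
  have hsymm : ∀ θ ∈ Ico 1 (h + 1),
      scaledCscSq (2 * h + 1) (2 * h + 1 - θ) ^ m = scaledCscSq (2 * h + 1) θ ^ m := by
    intro θ hθ
    rw [scaledCscSq_sub (by grind) (by omega)]
  simpa using sum_Ico_one_eq_two_nsmul_of_symm (fun θ ↦ scaledCscSq (2 * h + 1) θ ^ m) h hsymm

lemma isIntegral_scaledCscSq (hodd : Odd n) (hpos : 0 < θ) (hlt : θ < n) :
    IsIntegral ℤ (scaledCscSq n θ) := by
  have hζ := Complex.isPrimitiveRoot_exp n hodd.pos.ne'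
  have hroot : (Complex.exp (2 * π * Complex.I / n) ^ θ) ^ n = 1 := by
    rw [pow_right_comm, hζ.pow_eq_one, one_pow]
  rw [← isIntegral_algebraMap_iff (algebraMap ℝ ℂ).injective, Complex.coe_algebraMap,
    ofReal_scaledCscSq]
  refine ((hζ.isIntegral hodd.pos).pow θ).neg.mul (isIntegral_natCast_div_one_sub_sq hodd hroot ?_)
  exact hζ.pow_ne_one_of_pos_of_lt hpos.ne' hlt

lemma sum_scaledCscSq_pow_mem_range_algebraMap (hn : 0 < n) (m : ℕ) :
    ∑ θ ∈ Ico 1 n, scaledCscSq n θ ^ m ∈ (algebraMap ℚ ℝ).range := by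
  obtain ⟨r, hr⟩ := sum_neg_mul_div_one_sub_sq_pow_mem_range_algebraMap hn
    (Complex.isPrimitiveRoot_exp n hn.ne') m
  simp only [← ofReal_scaledCscSq, eq_ratCast] at hr
  exact ⟨r, by rw [eq_ratCast]; exact_mod_cast hr⟩

lemma pow_div_two_pow_mul_sum_inv_sin_pow (n m : ℕ) :
    (n : ℝ) ^ m / 2 ^ (2 * m + 1) * ∑ θ ∈ Ico 1 n, 1 / sin (π * θ / n) ^ (2 * m) =
      (∑ θ ∈ Ico 1 n, scaledCscSq n θ ^ m) / 2 := by
  rw [mul_sum, sum_div]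
  refine sum_congr rfl fun θ _ ↦ ?_
  rw [scaledCscSq, div_pow, mul_pow, pow_succ, pow_mul, pow_mul,
    show (2 : ℝ) ^ 2 = 4 by norm_num]
  ring

end ScaledCscSq

theorem stmt_6_general (n m : ℕ) (hodd : Odd n) (hn : 1 < n) :
    ∃ N : ℕ, 0 < N ∧
      ((n : ℝ) ^ m / 2 ^ (2 * m + 1)) *
        ∑ θ ∈ Icc 1 (n - 1), 1 / Real.sin (π * θ / n) ^ (2 * m) = N := by
  obtain ⟨h, rfl⟩ := hodd
  set S := ∑ θ ∈ Ico 1 (h + 1), scaledCscSq (2 * h + 1) θ ^ m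
  have hhalf : ∑ θ ∈ Ico 1 (2 * h + 1), scaledCscSq (2 * h + 1) θ ^ m = 2 * S :=
    sum_scaledCscSq_pow_eq_two_mul h m
  have hpos : 0 < S := sum_pos (fun θ hθ ↦ pow_pos (scaledCscSq_pos (by grind) (by grind)) m)
    (nonempty_Ico.mpr (by omega))
  have hint : IsIntegral ℤ S := IsIntegral.sum _ fun θ hθ ↦
    (isIntegral_scaledCscSq (odd_two_mul_add_one h) (by grind) (by grind)).pow m
  have hrat : S ∈ (algebraMap ℚ ℝ).range := by
    obtain ⟨r, hr⟩ := sum_scaledCscSq_pow_mem_range_algebraMap (2 * h).succ_pos m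
    exact ⟨r / 2, by rw [map_div₀, hr, hhalf, map_ofNat, mul_div_cancel_left₀ _ two_ne_zero]⟩
  obtain ⟨k, hk⟩ := exists_intCast_eq_of_isIntegral_of_mem_range hint hrat
  lift k to ℕ using by exact_mod_cast hk ▸ hpos.le
  refine ⟨k, by exact_mod_cast hk ▸ hpos, ?_⟩
  rw [Icc_sub_one_right_eq_Ico_of_not_isMin (by simp), pow_div_two_pow_mul_sum_inv_sin_pow, hhalf,
    mul_div_cancel_left₀ _ two_ne_zero, hk, Int.cast_natCast]

theorem stmt_6 (p g : ℕ) (hp : p.Prime) (hodd : Odd p) (hg : 2 ≤ g)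
    (hpg : 2 * (g - 1) < p) :
    ∃ n : ℕ, 0 < n ∧
      ((p : ℝ) ^ (g - 1) / 2 ^ (2 * g - 1)) *
        ∑ θ ∈ Finset.Icc 1 (p - 1), 1 / Real.sin (π * θ / p) ^ (2 * g - 2) = n := by
  obtain ⟨m, rfl⟩ := Nat.exists_eq_add_of_le' (one_le_two.trans hg)
  exact stmt_6_general p m hodd hp.one_lt
end

section
/- Let p be an odd prime with p > 6. Then (p^3/2^7) · Σ_{θ=1}^{p-1} 1/sin^6(πθ/p) = (2p^9 + 21p^7 + 168p^5 - 191p^3)/120960. (This is the genus-4 case of the degree formula of Corollary 5.4.) -/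
open Real

/-!
For `0 ≤ k ≤ n` consider the finite Fourier series
`T m k = ∑ θ, cos (2kπθ/n) / sin (πθ/n) ^ (2m)`. Since
`cos (2(k+1)x) - 2 cos (2kx) + cos (2(k-1)x) = -4 sin² x cos (2kx)`,
the second difference of `T (m + 1)` is `-4 T m`, and `T 0 = -1` away from the multiples of `n`.
A function on `{0, …, n}` with equal end values is determined by its second difference and its
sum over a period, and `T (m + 1)` has sum zero. So `T 1`, `T 2`, `T 3` are found by integrating
twice repeatedly: they are polynomials in `k (n - k)`, and the theorem evaluates `T 3` at `k = 0`.
-/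

section SecondDifference

lemma eq_add_mul_of_secondDiff_eq_zero {R : Type*} [CommRing R] {n : ℕ} {f : ℕ → R}
    (hf : ∀ k, k + 1 < n → f (k + 2) - 2 * f (k + 1) + f k = 0) :
    ∀ k ≤ n, f k = f 0 + k * (f 1 - f 0) := by
  intro k
  induction k using Nat.twoStepInduction with
  | zero => simp
  | one => simp
  | more k ih ih' =>
    intro hk
    have hk₀ := ih (by lia)
    have hk₁ := ih' (by lia)
    push_cast at hk₁ ⊢
    linear_combination hf k (by lia) + 2 * hk₁ - hk₀

variable {K : Type*} [Field K] [CharZero K] {n : ℕ}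

lemma eq_zero_of_secondDiff_eq_zero (hn : n ≠ 0) {f : ℕ → K}
    (hf : ∀ k, k + 1 < n → f (k + 2) - 2 * f (k + 1) + f k = 0)
    (hper : f n = f 0) (hsum : ∑ k ∈ Finset.range n, f k = 0) :
    ∀ k ≤ n, f k = 0 := by
  have hn' : (n : K) ≠ 0 := Nat.cast_ne_zero.mpr hn
  have affine := eq_add_mul_of_secondDiff_eq_zero hf
  have slope_eq_zero : f 1 - f 0 = 0 := by
    have h := affine n le_rfl
    rw [hper, left_eq_add] at h
    exact (mul_eq_zero.mp h).resolve_left hn'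
  have const : ∀ k ≤ n, f k = f 0 := fun k hk ↦ by
    rw [affine k hk, slope_eq_zero, mul_zero, add_zero]
  have f_zero : f 0 = 0 := by
    rw [Finset.sum_congr rfl fun k hk ↦ const k (Finset.mem_range.mp hk).le, Finset.sum_const,
      Finset.card_range, nsmul_eq_mul] at hsum
    exact (mul_eq_zero.mp hsum).resolve_left hn'
  exact fun k hk ↦ (const k hk).trans f_zero

end SecondDifference

section PowerSums

variable {K : Type*} [Field K] [CharZero K]

lemma sum_range_mul_sub (a : K) (n : ℕ) :
    ∑ k ∈ Finset.range n, (k : K) * (a - k) =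
      a * (n ^ 2 / 2 - n / 2) - (n ^ 3 / 3 - n ^ 2 / 2 + n / 6) := by
  induction n with
  | zero => simp
  | succ n ih => rw [Finset.sum_range_succ, ih]; push_cast; ring

lemma sum_range_mul_sub_sq (a : K) (n : ℕ) :
    ∑ k ∈ Finset.range n, ((k : K) * (a - k)) ^ 2 =
      a ^ 2 * (n ^ 3 / 3 - n ^ 2 / 2 + n / 6) - 2 * a * (n ^ 4 / 4 - n ^ 3 / 2 + n ^ 2 / 4)
        + (n ^ 5 / 5 - n ^ 4 / 2 + n ^ 3 / 3 - n / 30) := by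
  induction n with
  | zero => simp
  | succ n ih => rw [Finset.sum_range_succ, ih]; push_cast; ring

lemma sum_range_mul_sub_cube (a : K) (n : ℕ) :
    ∑ k ∈ Finset.range n, ((k : K) * (a - k)) ^ 3 =
      a ^ 3 * (n ^ 4 / 4 - n ^ 3 / 2 + n ^ 2 / 4)
        - 3 * a ^ 2 * (n ^ 5 / 5 - n ^ 4 / 2 + n ^ 3 / 3 - n / 30)
        + 3 * a * (n ^ 6 / 6 - n ^ 5 / 2 + 5 * n ^ 4 / 12 - n ^ 2 / 12)
        - (n ^ 7 / 7 - n ^ 6 / 2 + n ^ 5 / 2 - n ^ 3 / 6 + n / 42) := by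
  induction n with
  | zero => simp
  | succ n ih => rw [Finset.sum_range_succ, ih]; push_cast; ring

end PowerSums

section CosineSums

lemma sin_pi_mul_div_ne_zero {θ n : ℕ} (hθ : 0 < θ) (hθn : θ < n) : sin (π * θ / n) ≠ 0 := by
  have hn : (0 : ℝ) < n := Nat.cast_pos.mpr (hθ.trans hθn)
  refine (sin_pos_of_pos_of_lt_pi (by positivity) ?_).ne'
  rw [div_lt_iff₀ hn]
  gcongr

lemma sum_range_cos_eq_zero {θ n : ℕ} (hθ : 0 < θ) (hθn : θ < n) :
    ∑ k ∈ Finset.range n, cos (2 * k * (π * θ / n)) = 0 := by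
  have hn : (n : ℝ) ≠ 0 := Nat.cast_ne_zero.mpr (by lia)
  have hangle : n * (2 * (π * θ / n)) / 2 = θ * π := by field_simp
  have h := sin_mul_sum_cos n (2 * (π * θ / n)) 0
  rw [hangle, sin_nat_mul_pi, zero_mul, mul_div_cancel_left₀ _ two_ne_zero] at h
  have hsum := (mul_eq_zero.mp h).resolve_left (sin_pi_mul_div_ne_zero hθ hθn)
  convert hsum using 3
  ring

end CosineSums

/-- The power sum of even order `2 * m` of the cosecants of `π * θ / n`, `0 < θ < n`, twisted by
the cosine of frequency `k`. As a function of `k` it is the finite Fourier transform on `ℤ/n` of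
`θ ↦ 1 / sin (π * θ / n) ^ (2 * m)`. -/
noncomputable def twistedCosecSum (n m k : ℕ) : ℝ :=
  ∑ θ ∈ Finset.Icc 1 (n - 1), cos (2 * k * (π * θ / n)) / sin (π * θ / n) ^ (2 * m)

section TwistedCosecSum

variable {n m k : ℕ}

lemma twistedCosecSum_secondDiff (n m k : ℕ) :
    twistedCosecSum n (m + 1) (k + 2) - 2 * twistedCosecSum n (m + 1) (k + 1)
      + twistedCosecSum n (m + 1) k = -4 * twistedCosecSum n m (k + 1) := by
  simp only [twistedCosecSum, Finset.mul_sum, ← Finset.sum_sub_distrib, ← Finset.sum_add_distrib]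
  refine Finset.sum_congr rfl fun θ hθ ↦ ?_
  rw [Finset.mem_Icc] at hθ
  have hsin : sin (π * θ / n) ≠ 0 := sin_pi_mul_div_ne_zero (by lia) (by lia)
  set x := π * θ / n
  have hsucc : 2 * ((k + 2 : ℕ) : ℝ) * x = 2 * ((k + 1 : ℕ) : ℝ) * x + 2 * x := by
    push_cast; ring
  have hpred : 2 * (k : ℝ) * x = 2 * ((k + 1 : ℕ) : ℝ) * x - 2 * x := by push_cast; ring
  rw [hsucc, hpred, cos_add, cos_sub, cos_two_mul, cos_sq']
  field_simp
  ring

lemma twistedCosecSum_self (hn : n ≠ 0) (m : ℕ) :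
    twistedCosecSum n m n = twistedCosecSum n m 0 := by
  refine Finset.sum_congr rfl fun θ _ ↦ ?_
  have hangle : 2 * (n : ℝ) * (π * θ / n) = θ * (2 * π) := by field_simp
  rw [hangle, cos_nat_mul_two_pi, Nat.cast_zero, mul_zero, zero_mul, cos_zero]

lemma sum_range_twistedCosecSum (n m : ℕ) :
    ∑ k ∈ Finset.range n, twistedCosecSum n m k = 0 := by
  simp only [twistedCosecSum]
  rw [Finset.sum_comm]
  refine Finset.sum_eq_zero fun θ hθ ↦ ?_
  rw [Finset.mem_Icc] at hθ
  rw [← Finset.sum_div, sum_range_cos_eq_zero (by lia) (by lia), zero_div]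

lemma twistedCosecSum_zero (hk : 0 < k) (hkn : k < n) : twistedCosecSum n 0 k = -1 := by
  have hrange : Finset.range n = insert 0 (Finset.Icc 1 (n - 1)) := by
    ext θ
    simp only [Finset.mem_range, Finset.mem_insert, Finset.mem_Icc]
    lia
  have hswap : twistedCosecSum n 0 k =
      ∑ θ ∈ Finset.Icc 1 (n - 1), cos (2 * θ * (π * k / n)) := by
    refine Finset.sum_congr rfl fun θ _ ↦ ?_
    rw [mul_zero, pow_zero, div_one]
    ring_nf
  have hsum := sum_range_cos_eq_zero hk hkn
  rw [hrange, Finset.sum_insert (by simp), ← hswap, Nat.cast_zero, mul_zero, zero_mul,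
    cos_zero] at hsum
  linarith

lemma twistedCosecSum_succ_eq_of_secondDiff (hn : n ≠ 0) {F : ℕ → ℝ}
    (hF : ∀ k, k + 1 < n → F (k + 2) - 2 * F (k + 1) + F k = -4 * twistedCosecSum n m (k + 1))
    (hper : F n = F 0) (hsum : ∑ k ∈ Finset.range n, F k = 0) :
    ∀ k ≤ n, twistedCosecSum n (m + 1) k = F k := by
  refine fun k hk ↦ sub_eq_zero.mp (eq_zero_of_secondDiff_eq_zero hn
    (f := fun k ↦ twistedCosecSum n (m + 1) k - F k) (fun k hk ↦ ?_) ?_ ?_ k hk)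
  · linear_combination twistedCosecSum_secondDiff n m k - hF k hk
  · rw [twistedCosecSum_self hn, hper]
  · rw [Finset.sum_sub_distrib, sum_range_twistedCosecSum, hsum, sub_zero]

lemma twistedCosecSum_one (hn : n ≠ 0) :
    ∀ k ≤ n, twistedCosecSum n 1 k = ((n : ℝ) ^ 2 - 1) / 3 - 2 * (k * (n - k)) := by
  refine twistedCosecSum_succ_eq_of_secondDiff hn (fun k hk ↦ ?_) ?_ ?_
  · rw [twistedCosecSum_zero k.succ_pos hk]
    push_cast
    ring
  · simp
  · simp only [Finset.sum_sub_distrib, ← Finset.mul_sum, sum_range_mul_sub, Finset.sum_const,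
      Finset.card_range, nsmul_eq_mul]
    ring

lemma twistedCosecSum_two (hn : n ≠ 0) :
    ∀ k ≤ n, twistedCosecSum n 2 k = ((n : ℝ) ^ 2 - 1) * (n ^ 2 + 11) / 45
      - 4 / 3 * (k * (n - k)) - 2 / 3 * (k * (n - k)) ^ 2 := by
  refine twistedCosecSum_succ_eq_of_secondDiff hn (fun k hk ↦ ?_) ?_ ?_
  · rw [twistedCosecSum_one hn _ hk.le]
    push_cast
    ring
  · simp
  · simp only [Finset.sum_sub_distrib, ← Finset.mul_sum, sum_range_mul_sub, sum_range_mul_sub_sq,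
      Finset.sum_const, Finset.card_range, nsmul_eq_mul]
    ring

lemma twistedCosecSum_three (hn : n ≠ 0) :
    ∀ k ≤ n, twistedCosecSum n 3 k = (2 * (n : ℝ) ^ 6 + 21 * n ^ 4 + 168 * n ^ 2 - 191) / 945
      - 16 / 15 * (k * (n - k)) - 2 * (n ^ 2 + 15) / 45 * (k * (n - k)) ^ 2
      - 4 / 45 * (k * (n - k)) ^ 3 := by
  refine twistedCosecSum_succ_eq_of_secondDiff hn (fun k hk ↦ ?_) ?_ ?_
  · rw [twistedCosecSum_two hn _ hk.le]
    push_cast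
    ring
  · simp
  · simp only [Finset.sum_sub_distrib, ← Finset.mul_sum, sum_range_mul_sub, sum_range_mul_sub_sq,
      sum_range_mul_sub_cube, Finset.sum_const, Finset.card_range, nsmul_eq_mul]
    ring

lemma sum_one_div_sin_pow_six (hn : n ≠ 0) :
    ∑ θ ∈ Finset.Icc 1 (n - 1), 1 / sin (π * θ / n) ^ 6 =
      (2 * (n : ℝ) ^ 6 + 21 * n ^ 4 + 168 * n ^ 2 - 191) / 945 := by
  simpa [twistedCosecSum] using twistedCosecSum_three hn 0 n.zero_le

end TwistedCosecSum

theorem stmt_9_general (n : ℕ) (hn : n ≠ 0) :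
    ((n : ℝ) ^ 3 / 2 ^ 7) * ∑ θ ∈ Finset.Icc 1 (n - 1), 1 / Real.sin (π * θ / n) ^ 6 =
      (2 * (n : ℝ) ^ 9 + 21 * n ^ 7 + 168 * n ^ 5 - 191 * n ^ 3) / 120960 := by
  rw [sum_one_div_sin_pow_six hn]
  ring

theorem stmt_9 (p : ℕ) (hp : p.Prime) (hodd : Odd p) (hp6 : 6 < p) :
    ((p : ℝ) ^ 3 / 2 ^ 7) * ∑ θ ∈ Finset.Icc 1 (p - 1), 1 / Real.sin (π * θ / p) ^ 6 =
      (2 * (p : ℝ) ^ 9 + 21 * p ^ 7 + 168 * p ^ 5 - 191 * p ^ 3) / 120960 :=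
  stmt_9_general p hp.ne_zero
end

section
/- Let p be an odd prime with p > 12. Then (p^6/2^13) · Σ_{θ=1}^{p-1} 1/sin^12(πθ/p) = (1/8192) · ((1382/638512875)p^18 + (4/93555)p^16 + (31/70875)p^14 + (556/178605)p^12 + (3832/212625)p^10 + (256/2079)p^8 - (92427157/638512875)p^6). (This is the genus-7 case of the degree formula of Corollary 5.4.) -/
open Real

/-!
The polynomial `1 - T_n(1 - 2X)` has a simple root at `0` and takes the value `2 sin² (n t)` at
`X = sin² t`, so it equals `2 n² X ∏ (1 - X / sin² (π k / n))`, the product running over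
`1 ≤ k ≤ n - 1`. Its coefficients are explicit, because the Chebyshev differential equation
determines the derivatives of `T_n` at `1`; up to sign and scaling they are the elementary
symmetric functions of the numbers `1 / sin² (π k / n)`. Newton's identities then give the power
sums of these numbers, of which the sixth is wanted.
-/

open Polynomial Finset

section PowerSums

variable {R : Type*} [CommRing R]

lemma coeff_prod_one_sub_C_mul_X {σ : Type*} [Fintype σ] (y : σ → R) (k : ℕ) :
    (∏ i, (1 - C (y i) * X)).coeff k =
      (-1) ^ k * MvPolynomial.aeval y (MvPolynomial.esymm σ R k) := by
  classical
  have expand : ∏ i, (1 - C (y i) * X) =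
      ∑ t : Finset σ, C ((-1) ^ #t * ∏ i ∈ t, y i) * X ^ #t := by
    simp only [sub_eq_add_neg, prod_one_add, powerset_univ, prod_neg, prod_mul_distrib, prod_const]
    simp [map_prod, mul_assoc]
  simp only [expand, finsetSum_coeff, coeff_C_mul_X_pow, MvPolynomial.esymm, map_sum, mul_sum,
    ← univ_filter_card_eq, sum_filter]
  refine sum_congr rfl fun t _ ↦ ?_
  by_cases ht : #t = k
  · simp [ht]
  · simp [ht, Ne.symm ht]

lemma natCast_mul_coeff_prod_one_sub_C_mul_X {ι : Type*} (s : Finset ι) (y : ι → R) (k : ℕ) :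
    k * (∏ i ∈ s, (1 - C (y i) * X)).coeff k =
      -∑ j ∈ range k, (∏ i ∈ s, (1 - C (y i) * X)).coeff j * ∑ i ∈ s, y i ^ (k - j) := by
  have newton := congrArg (MvPolynomial.aeval fun i : s ↦ y i)
    (MvPolynomial.mul_esymm_eq_sum s R k)
  rw [sum_filter, Nat.sum_antidiagonal_eq_sum_range_succ_mk, sum_range_succ, if_neg (lt_irrefl k),
    add_zero, sum_congr rfl fun j hj ↦ if_pos (mem_range.mp hj)] at newton
  simp only [map_mul, map_natCast, map_pow, map_neg, map_one, map_sum, MvPolynomial.psum,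
    MvPolynomial.aeval_X] at newton
  simp only [← prod_coe_sort s, ← sum_coe_sort s, coeff_prod_one_sub_C_mul_X]
  rw [mul_left_comm, newton, ← mul_assoc, ← pow_add,
    Odd.neg_one_pow (n := k + (k + 1)) ⟨k, by ring⟩, neg_one_mul]

lemma sum_pow_succ_eq_coeff_prod_one_sub_C_mul_X {ι : Type*} (s : Finset ι) (y : ι → R) (k : ℕ) :
    ∑ i ∈ s, y i ^ (k + 1) =
      -(k + 1) * (∏ i ∈ s, (1 - C (y i) * X)).coeff (k + 1) -
        ∑ j ∈ range k, (∏ i ∈ s, (1 - C (y i) * X)).coeff (j + 1) * ∑ i ∈ s, y i ^ (k - j) := by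
  have newton := natCast_mul_coeff_prod_one_sub_C_mul_X s y (k + 1)
  have coeff_zero : (∏ i ∈ s, (1 - C (y i) * X)).coeff 0 = 1 := by
    simp [coeff_zero_eq_eval_zero, eval_prod]
  simp only [sum_range_succ', coeff_zero, Nat.add_sub_add_right, Nat.sub_zero, one_mul] at newton
  push_cast at newton
  linear_combination newton

end PowerSums

section Chebyshev

open Chebyshev
open scoped Nat

lemma factorial_two_mul_mul_iterate_derivative_T_eval_one {R : Type*} [CommRing R]
    (n : ℤ) (k : ℕ) :
    ((2 * k)! : R) * (derivative^[k] (T R n)).eval 1 =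
      2 ^ k * k ! * ∏ l ∈ range k, ((n : R) ^ 2 - (l : R) ^ 2) := by
  induction k with
  | zero => simp
  | succ k ih =>
    have step := iterate_derivative_T_eval_one_recurrence (R := R) n k
    rw [prod_range_succ, mul_add_one, Nat.factorial_succ, Nat.factorial_succ,
      Nat.factorial_succ]
    push_cast
    linear_combination (2 * k + 2) * ((2 * k)! : R) * step +
      (2 * k + 2) * ((n : R) ^ 2 - (k : R) ^ 2) * ih

lemma coeff_T_comp_one_sub_two_mul_X {K : Type*} [Field K] [CharZero K] (n : ℤ) (k : ℕ) :
    ((T K n).comp (1 - 2 * X)).coeff k =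
      (-4) ^ k * (∏ l ∈ range k, ((n : K) ^ 2 - (l : K) ^ 2)) / (2 * k)! := by
  have comp_eq_taylor : (T K n).comp (1 - 2 * X) = (taylor 1 (T K n)).comp (C (-2) * X) := by
    rw [taylor_apply, comp_assoc]
    congr 1
    simp only [add_comp, X_comp, one_comp, map_neg, map_one, C_ofNat]
    ring
  have taylor_coeff_eq : k ! * (taylor 1 (T K n)).coeff k = (derivative^[k] (T K n)).eval 1 := by
    rw [taylor_coeff, ← factorial_smul_hasseDeriv]
    simp
  have derivative_eq := factorial_two_mul_mul_iterate_derivative_T_eval_one (R := K) n k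
  have neg_four_pow : (-4 : K) ^ k = (-2) ^ k * 2 ^ k := by rw [← mul_pow]; norm_num
  rw [comp_eq_taylor, comp_C_mul_X_coeff, eq_div_iff (mod_cast (2 * k).factorial_ne_zero),
    neg_four_pow]
  rw [← taylor_coeff_eq] at derivative_eq
  refine mul_left_cancel₀ (mod_cast k.factorial_ne_zero : (k ! : K) ≠ 0) ?_
  linear_combination (-2) ^ k * derivative_eq

lemma eval_U_real_eq_prod (m : ℕ) (x : ℝ) :
    (U ℝ m).eval x = 2 ^ m * ∏ k ∈ Icc 1 m, (x - cos (π * k / (m + 1))) := by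
  have injOn := (range m).nodup_map_iff_injOn.mp (roots_U_real_nodup m)
  have splits : (U ℝ m).Splits := by
    rw [splits_iff_card_roots, roots_U_real, ← Finset.card_def, card_image_of_injOn injOn,
      card_range, natDegree_U_natCast]
  have prod_roots : ((U ℝ m).roots.map (x - ·)).prod =
      ∏ k ∈ range m, (x - cos ((k + 1) * π / (m + 1))) := by
    rw [roots_U_real]
    exact prod_image injOn
  rw [splits.eval_eq_prod_roots, leadingCoeff_U_natCast, prod_roots,
    ← Ico_add_one_right_eq_Icc, prod_Ico_eq_prod_range]
  simp [add_comm, mul_comm]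

lemma eval_U_real_sq_eq_prod (m : ℕ) (x : ℝ) :
    (U ℝ m).eval x ^ 2 = 4 ^ m * ∏ k ∈ Icc 1 m, (x ^ 2 - cos (π * k / (m + 1)) ^ 2) := by
  have eval_neg : (U ℝ m).eval (-x) = (-1) ^ m * (U ℝ m).eval x := by
    simp [U_eval_neg]
  have neg_one_pow_sq : ((-1 : ℝ) ^ m) ^ 2 = 1 := by rw [pow_right_comm, neg_one_sq, one_pow]
  have four_pow : (4 : ℝ) ^ m = (2 ^ m) ^ 2 := by rw [pow_right_comm]; norm_num
  have pair_factors : ∏ k ∈ Icc 1 m, (x ^ 2 - cos (π * k / (m + 1)) ^ 2) =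
      (-1) ^ m * (∏ k ∈ Icc 1 m, (-x - cos (π * k / (m + 1)))) *
        ∏ k ∈ Icc 1 m, (x - cos (π * k / (m + 1))) := by
    have neg_one_pow : (-1 : ℝ) ^ m = ∏ _k ∈ Icc 1 m, (-1) := by simp
    rw [neg_one_pow, ← prod_mul_distrib, ← prod_mul_distrib]
    exact prod_congr rfl fun k _ ↦ by ring
  calc (U ℝ m).eval x ^ 2 = (-1) ^ m * (U ℝ m).eval (-x) * (U ℝ m).eval x := by
        linear_combination -(U ℝ m).eval x ^ 2 * neg_one_pow_sq -
          (-1) ^ m * (U ℝ m).eval x * eval_neg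
    _ = 4 ^ m * ∏ k ∈ Icc 1 m, (x ^ 2 - cos (π * k / (m + 1)) ^ 2) := by
        rw [eval_U_real_eq_prod, eval_U_real_eq_prod, pair_factors, four_pow]
        ring

end Chebyshev

section CosecantSums

open Chebyshev
open scoped Nat

/-- The polynomial whose reciprocal roots are the numbers `1 / sin² (π k / n)` for
`1 ≤ k ≤ n - 1`, normalised to have constant term `1`. It is indexed by its degree `m = n - 1`. -/
noncomputable def cscSqPoly (m : ℕ) : ℝ[X] :=
  ∏ k ∈ Icc 1 m, (1 - C (1 / sin (π * k / (m + 1)) ^ 2) * X)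

/-- The `j`-th power sum of the numbers `1 / sin² (π k / n)` for `1 ≤ k ≤ n - 1`, indexed by their
number `m = n - 1`. -/
noncomputable def cscSqPowerSum (m j : ℕ) : ℝ :=
  ∑ k ∈ Icc 1 m, (1 / sin (π * k / (m + 1)) ^ 2) ^ j

variable (m : ℕ)

lemma four_pow_mul_prod_sin_sq :
    4 ^ m * ∏ k ∈ Icc 1 m, sin (π * k / (m + 1)) ^ 2 = ((m : ℝ) + 1) ^ 2 := by
  simpa [← sin_sq] using (eval_U_real_sq_eq_prod m 1).symm

lemma eval_U_real_sq_eq_eval_cscSqPoly (x : ℝ) :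
    (U ℝ m).eval x ^ 2 = (m + 1) ^ 2 * (cscSqPoly m).eval (1 - x ^ 2) := by
  have prod_sin := four_pow_mul_prod_sin_sq m
  have sin_sq_ne_zero : ∀ k ∈ Icc 1 m, sin (π * k / (m + 1)) ^ 2 ≠ 0 :=
    prod_ne_zero_iff.mp (right_ne_zero_of_mul (prod_sin.trans_ne (by positivity)))
  rw [eval_U_real_sq_eq_prod, ← prod_sin, cscSqPoly, eval_prod, mul_assoc, ← prod_mul_distrib]
  congr 1
  refine prod_congr rfl fun k hk ↦ ?_
  simp only [eval_sub, eval_one, eval_mul, eval_C, eval_X]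
  rw [mul_sub, mul_one, ← mul_assoc, mul_one_div_cancel (sin_sq_ne_zero k hk)]
  linear_combination -sin_sq_add_cos_sq (π * k / (m + 1))

lemma one_sub_T_comp_eq_cscSqPoly :
    1 - (T ℝ (m + 1)).comp (1 - 2 * X) = C (2 * ((m : ℝ) + 1) ^ 2) * X * cscSqPoly m := by
  have eval_sin_sq (t : ℝ) : (1 - (T ℝ (m + 1)).comp (1 - 2 * X)).eval (sin t ^ 2) =
      (C (2 * ((m : ℝ) + 1) ^ 2) * X * cscSqPoly m).eval (sin t ^ 2) := by
    have eval_T : (T ℝ (m + 1)).eval (1 - 2 * sin t ^ 2) = 1 - 2 * sin ((m + 1) * t) ^ 2 := by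
      rw [← cos_two_mul_eq_one_sub, T_real_cos, ← cos_two_mul_eq_one_sub]
      push_cast
      rw [mul_left_comm]
    have eval_U : (U ℝ m).eval (cos t) * sin t = sin ((m + 1) * t) := mod_cast U_real_cos t m
    have eval_U_sq := eval_U_real_sq_eq_eval_cscSqPoly m (cos t)
    rw [← sin_sq] at eval_U_sq
    simp only [eval_sub, eval_one, eval_comp, eval_mul, eval_ofNat, eval_X, eval_C]
    rw [eval_T, ← eval_U]
    linear_combination 2 * sin t ^ 2 * eval_U_sq
  refine eq_of_infinite_eval_eq _ _ ((Set.Icc_infinite zero_lt_one).mono fun z hz ↦ ?_)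
  have eval_z := eval_sin_sq (arcsin (√z))
  rwa [sin_arcsin (by linarith [sqrt_nonneg z]) (sqrt_le_one.mpr hz.2), sq_sqrt hz.1] at eval_z

lemma coeff_cscSqPoly (k : ℕ) :
    (cscSqPoly m).coeff k =
      2 * (-4) ^ k * (∏ l ∈ range k, (((m : ℝ) + 1) ^ 2 - (l + 1) ^ 2)) / (2 * k + 2)! := by
  have coeff_T := coeff_T_comp_one_sub_two_mul_X (K := ℝ) (m + 1) (k + 1)
  have coeff_eq : -((T ℝ (m + 1)).comp (1 - 2 * X)).coeff (k + 1) =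
      2 * ((m : ℝ) + 1) ^ 2 * (cscSqPoly m).coeff k := by
    have coeff_succ := congrArg (coeff · (k + 1)) (one_sub_T_comp_eq_cscSqPoly m)
    simpa only [mul_assoc, coeff_sub, coeff_one, Nat.add_eq_zero_iff, one_ne_zero, and_false,
      ↓reduceIte, zero_sub, coeff_C_mul, coeff_X_mul] using coeff_succ
  rw [prod_range_succ', mul_add_one] at coeff_T
  push_cast at coeff_T
  refine mul_left_cancel₀ (by positivity : 2 * ((m : ℝ) + 1) ^ 2 ≠ 0) ?_
  rw [← coeff_eq, coeff_T]
  ring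

lemma cscSqPowerSum_succ (k : ℕ) :
    cscSqPowerSum m (k + 1) = -(k + 1) * (cscSqPoly m).coeff (k + 1) -
      ∑ j ∈ range k, (cscSqPoly m).coeff (j + 1) * cscSqPowerSum m (k - j) :=
  sum_pow_succ_eq_coeff_prod_one_sub_C_mul_X _ _ k

lemma cscSqPowerSum_one : cscSqPowerSum m 1 = (((m : ℝ) + 1) ^ 2 - 1) / 3 := by
  rw [cscSqPowerSum_succ]
  simp only [coeff_cscSqPoly, sum_range_zero, prod_range_succ, prod_range_zero, Nat.factorial]
  push_cast
  ring

lemma cscSqPowerSum_two :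
    cscSqPowerSum m 2 = (((m : ℝ) + 1) ^ 4 + 10 * (m + 1) ^ 2 - 11) / 45 := by
  rw [cscSqPowerSum_succ]
  simp only [coeff_cscSqPoly, sum_range_succ, sum_range_zero, prod_range_succ, prod_range_zero,
    Nat.factorial, Nat.reduceSub, cscSqPowerSum_one]
  push_cast
  ring

lemma cscSqPowerSum_three :
    cscSqPowerSum m 3 =
      (2 * ((m : ℝ) + 1) ^ 6 + 21 * (m + 1) ^ 4 + 168 * (m + 1) ^ 2 - 191) / 945 := by
  rw [cscSqPowerSum_succ]
  simp only [coeff_cscSqPoly, sum_range_succ, sum_range_zero, prod_range_succ, prod_range_zero,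
    Nat.factorial, Nat.reduceSub, cscSqPowerSum_one, cscSqPowerSum_two]
  push_cast
  ring

lemma cscSqPowerSum_four :
    cscSqPowerSum m 4 =
      (3 * ((m : ℝ) + 1) ^ 8 + 40 * (m + 1) ^ 6 + 294 * (m + 1) ^ 4 + 2160 * (m + 1) ^ 2 -
        2497) / 14175 := by
  rw [cscSqPowerSum_succ]
  simp only [coeff_cscSqPoly, sum_range_succ, sum_range_zero, prod_range_succ, prod_range_zero,
    Nat.factorial, Nat.reduceSub, cscSqPowerSum_one, cscSqPowerSum_two, cscSqPowerSum_three]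
  push_cast
  ring

lemma cscSqPowerSum_five :
    cscSqPowerSum m 5 =
      (2 * ((m : ℝ) + 1) ^ 10 + 33 * (m + 1) ^ 8 + 286 * (m + 1) ^ 6 + 1804 * (m + 1) ^ 4 +
        12672 * (m + 1) ^ 2 - 14797) / 93555 := by
  rw [cscSqPowerSum_succ]
  simp only [coeff_cscSqPoly, sum_range_succ, sum_range_zero, prod_range_succ, prod_range_zero,
    Nat.factorial, Nat.reduceSub, cscSqPowerSum_one, cscSqPowerSum_two, cscSqPowerSum_three,
    cscSqPowerSum_four]
  push_cast
  ring

lemma cscSqPowerSum_six :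
    cscSqPowerSum m 6 =
      (1382 * ((m : ℝ) + 1) ^ 12 + 27300 * (m + 1) ^ 10 + 279279 * (m + 1) ^ 8 +
        1987700 * (m + 1) ^ 6 + 11507496 * (m + 1) ^ 4 + 78624000 * (m + 1) ^ 2 -
          92427157) / 638512875 := by
  rw [cscSqPowerSum_succ]
  simp only [coeff_cscSqPoly, sum_range_succ, sum_range_zero, prod_range_succ, prod_range_zero,
    Nat.factorial, Nat.reduceSub, cscSqPowerSum_one, cscSqPowerSum_two, cscSqPowerSum_three,
    cscSqPowerSum_four, cscSqPowerSum_five]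
  push_cast
  ring

end CosecantSums

theorem stmt_12_general (n : ℕ) (hn : n ≠ 0) :
    ((n : ℝ) ^ 6 / 2 ^ 13) * ∑ θ ∈ Finset.Icc 1 (n - 1), 1 / Real.sin (π * θ / n) ^ 12 =
      (1 / 8192) * ((1382 / 638512875) * (n : ℝ) ^ 18 + (4 / 93555) * n ^ 16 +
        (31 / 70875) * n ^ 14 + (556 / 178605) * n ^ 12 + (3832 / 212625) * n ^ 10 +
        (256 / 2079) * n ^ 8 - (92427157 / 638512875) * n ^ 6) := by
  obtain ⟨m, rfl⟩ := Nat.exists_eq_add_one_of_ne_zero hn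
  have sum_eq : ∑ θ ∈ Finset.Icc 1 (m + 1 - 1), 1 / Real.sin (π * θ / (m + 1 : ℕ)) ^ 12 =
      cscSqPowerSum m 6 := by
    simp [cscSqPowerSum, ← pow_mul]
  rw [sum_eq, cscSqPowerSum_six]
  push_cast
  ring

theorem stmt_12 (p : ℕ) (hp : p.Prime) (hodd : Odd p) (hp12 : 12 < p) :
    ((p : ℝ) ^ 6 / 2 ^ 13) * ∑ θ ∈ Finset.Icc 1 (p - 1), 1 / Real.sin (π * θ / p) ^ 12 =
      (1 / 8192) * ((1382 / 638512875) * (p : ℝ) ^ 18 + (4 / 93555) * p ^ 16 +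
        (31 / 70875) * p ^ 14 + (556 / 178605) * p ^ 12 + (3832 / 212625) * p ^ 10 +
        (256 / 2079) * p ^ 8 - (92427157 / 638512875) * p ^ 6) :=
  stmt_12_general p hp.ne_zero
end

section
/- Let p be an odd prime with p > 16. Then (p^8/2^17) · Σ_{θ=1}^{p-1} 1/sin^16(πθ/p) = (1/131072) · p^8 · ((3617/162820783125)p^16 + (32/54729675)p^14 + (226648/28733079375)p^12 + (2144/29469825)p^10 + (4946/9568125)p^8 + (268864/88409475)p^6 + (17067584/1064188125)p^4 + (2048/19305)p^2 - 61430943169/488462349375). (This is the genus-9 case of the degree formula of Corollary 5.4.) -/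
open Real

/-!
For every positive integer `n`, the polynomial `1 - T_n(1 - 2X)` in the Chebyshev polynomial `T_n`
takes the value `2 sin² (nt) = 2 sin² t · U_{n-1}(cos t)²` at `X = sin² t`. Pairing the roots
`± cos (πk/n)` of `U_{n-1}` therefore gives
`1 - T_n(1 - 2X) = 2n² X ∏_{0 < k < n} (1 - csc² (πk/n) X)`.
The Taylor coefficients of `T_n` at `1` are explicit products, because of the Chebyshev differential
equation, so the elementary symmetric functions of the `csc² (πk/n)` are polynomials in `n`.
Newton's identities turn them into the power sums `∑ csc^{2j} (πk/n)`; the case `j = 8` is wanted.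
-/

namespace CscPowerSum

open Polynomial Finset

section NewtonIdentities

variable {ι R : Type*} [CommRing R] (s : Finset ι) (y : ι → R)

theorem coeff_prod_one_sub_C_mul_X (k : ℕ) :
    (∏ i ∈ s, (1 - C (y i) * X)).coeff k = (-1) ^ k * ∑ t ∈ s.powersetCard k, ∏ i ∈ t, y i := by
  have monomial_eq (t : Finset ι) :
      ∏ i ∈ t, -(C (y i) * X) = C ((-1) ^ #t * ∏ i ∈ t, y i) * X ^ #t := by
    simp [prod_neg, prod_mul_distrib, mul_assoc]
  simp_rw [sub_eq_add_neg, prod_one_add, monomial_eq, finsetSum_coeff, coeff_C_mul_X_pow,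
    ← sum_filter, powersetCard_eq_filter, mul_sum]
  refine sum_congr (by simp [eq_comm]) fun t ht ↦ ?_
  rw [(mem_filter.mp ht).2]

theorem sum_pow_succ_eq_neg_coeff_prod_one_sub_C_mul_X (k : ℕ) :
    ∑ i ∈ s, y i ^ (k + 1) = -((k + 1) * (∏ i ∈ s, (1 - C (y i) * X)).coeff (k + 1) +
      ∑ j ∈ range k, (∏ i ∈ s, (1 - C (y i) * X)).coeff (j + 1) * ∑ i ∈ s, y i ^ (k - j)) := by
  have newton := congrArg (MvPolynomial.aeval fun i : s ↦ y i)
    (MvPolynomial.psum_eq_mul_esymm_sub_sum s R (k + 1) k.succ_pos)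
  have aeval_psum (j : ℕ) :
      MvPolynomial.aeval (fun i : s ↦ y i) (MvPolynomial.psum s R j) = ∑ i ∈ s, y i ^ j := by
    simp [MvPolynomial.psum, sum_attach s fun i ↦ y i ^ j]
  have aeval_esymm (j : ℕ) :
      (-1) ^ j * MvPolynomial.aeval (fun i : s ↦ y i) (MvPolynomial.esymm s R j) =
        (∏ i ∈ s, (1 - C (y i) * X)).coeff j := by
    rw [← prod_coe_sort, coeff_prod_one_sub_C_mul_X]
    simp [MvPolynomial.esymm]
  have sum_interior (f : ℕ × ℕ → R) :
      ∑ a ∈ antidiagonal (k + 1) with a.1 ∈ Set.Ioo 0 (k + 1), f a =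
        ∑ j ∈ range k, f (j + 1, k - j) := by
    rw [sum_filter, Nat.sum_antidiagonal_eq_sum_range_succ_mk, sum_range_succ, sum_range_succ']
    simp only [Set.mem_Ioo, lt_irrefl, and_false, false_and, if_false, add_zero,
      Nat.add_sub_add_right]
    exact sum_congr rfl fun j hj ↦ if_pos (by simpa using hj)
  simp only [map_sub, map_mul, map_pow, map_neg, map_one, map_natCast, map_sum, aeval_psum,
    aeval_esymm, sum_interior] at newton
  rw [newton, ← aeval_esymm (k + 1)]
  push_cast
  ring

end NewtonIdentities

theorem coeff_T_comp_one_sub_two_mul_X {F : Type*} [Field F] [CharZero F] (n : ℤ) (j : ℕ) :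
    ((Chebyshev.T F n).comp (1 - 2 * X)).coeff j =
      ∏ l ∈ range j, 2 * ((l : F) ^ 2 - n ^ 2) / ((l + 1) * (2 * l + 1)) := by
  have comp_eq :
      (Chebyshev.T F n).comp (1 - 2 * X) = (taylor 1 (Chebyshev.T F n)).comp (C (-2) * X) := by
    simp [taylor_apply, comp_assoc, sub_eq_neg_add, C_ofNat]
  have hasseDeriv_mul_factorial : (hasseDeriv j (Chebyshev.T F n)).eval 1 * (j.factorial : F) =
      (derivative^[j] (Chebyshev.T F n)).eval 1 := by
    rw [← factorial_smul_hasseDeriv]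
    simp [mul_comm]
  have factorial_ne_zero : (j.factorial : F) ≠ 0 := mod_cast j.factorial_ne_zero
  rw [comp_eq, comp_C_mul_X_coeff, taylor_coeff,
    eq_div_of_mul_eq factorial_ne_zero hasseDeriv_mul_factorial,
    Chebyshev.iterate_derivative_T_eval_one_eq_div, ← prod_range_add_one_eq_factorial]
  push_cast
  rw [pow_eq_prod_const (-2), ← prod_div_distrib, ← prod_div_distrib, ← prod_mul_distrib]
  refine prod_congr rfl fun l _ ↦ ?_
  rw [div_div, div_mul_eq_mul_div]
  congr 1 <;> ring

theorem one_sub_T_two_mul {R : Type*} [CommRing R] (n : ℤ) :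
    1 - Chebyshev.T R (2 * n) = 2 * (1 - X ^ 2) * Chebyshev.U R (n - 1) ^ 2 := by
  have pell := congrArg (fun f : R[X] ↦ f.comp (2 * X)) (Chebyshev.S_sq_add_S_sq R (n - 1))
  simp only [sub_comp, add_comp, mul_comp, pow_comp, X_comp, one_comp,
    Chebyshev.S_comp_two_mul_X, sub_add_cancel] at pell
  have T_two_mul : Chebyshev.T R (2 * n) = 2 * Chebyshev.T R n ^ 2 - 1 := by
    simp [Chebyshev.T_mul, Chebyshev.T_two]
  rw [T_two_mul, Chebyshev.T_eq_U_sub_X_mul_U R n]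
  linear_combination -2 * pell

theorem U_real_eq_prod (m : ℕ) :
    Chebyshev.U ℝ m = C (2 ^ m) * ∏ k ∈ Icc 1 m, (X - C (cos (π * k / (m + 1)))) := by
  have roots_eq : (Chebyshev.U ℝ m).roots =
      (range m).val.map fun k : ℕ ↦ cos ((k + 1) * π / (m + 1)) := by
    rw [Chebyshev.roots_U_real, image_val_of_injOn
      ((range m).nodup_map_iff_injOn.mp (Chebyshev.roots_U_real_nodup m))]
  have card_roots : (Chebyshev.U ℝ m).roots.card = (Chebyshev.U ℝ m).natDegree := by
    simp [roots_eq]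
  have factorization := C_leadingCoeff_mul_prod_multiset_X_sub_C card_roots
  rw [roots_eq, Multiset.map_map, Chebyshev.leadingCoeff_U_natCast] at factorization
  rw [← factorization, ← Ico_add_one_right_eq_Icc, prod_Ico_eq_prod_range]
  simp [Finset.prod, add_comm, mul_comm]

theorem sin_pi_mul_div_pos {n k : ℕ} (hk₀ : 0 < k) (hkn : k < n) : 0 < sin (π * k / n) := by
  have k_pos : (0 : ℝ) < k := mod_cast hk₀
  have k_lt : (k : ℝ) < n := mod_cast hkn
  have n_pos := k_pos.trans k_lt
  apply sin_pos_of_pos_of_lt_pi (by positivity)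
  rw [div_lt_iff₀ n_pos]
  gcongr

theorem eval_U_real_sq_eq_four_pow_mul_prod (m : ℕ) (y : ℝ) :
    (Chebyshev.U ℝ m).eval y ^ 2 =
      4 ^ m * ∏ k ∈ Icc 1 m, (sin (π * k / (m + 1)) ^ 2 - (1 - y ^ 2)) := by
  have eval_eq_prod (x : ℝ) :
      (Chebyshev.U ℝ m).eval x = 2 ^ m * ∏ k ∈ Icc 1 m, (x - cos (π * k / (m + 1))) := by
    simp [U_real_eq_prod, eval_prod]
  have eval_eq_prod_add :
      (Chebyshev.U ℝ m).eval y = 2 ^ m * ∏ k ∈ Icc 1 m, (y + cos (π * k / (m + 1))) := by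
    have eval_neg := Chebyshev.U_eval_neg ℝ m (-y)
    have prod_neg_sub : ∏ k ∈ Icc 1 m, (-y - cos (π * k / (m + 1))) =
        (-1) ^ m * ∏ k ∈ Icc 1 m, (y + cos (π * k / (m + 1))) := by
      simp_rw [← neg_add', prod_neg, Nat.card_Icc, Nat.add_sub_cancel]
    rw [neg_neg, eval_eq_prod (-y), prod_neg_sub, mul_left_comm (2 ^ m), ← mul_assoc] at eval_neg
    simpa [Int.negOnePow_def, ← mul_pow] using eval_neg
  calc (Chebyshev.U ℝ m).eval y ^ 2
      = (2 ^ m * ∏ k ∈ Icc 1 m, (y - cos (π * k / (m + 1)))) *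
          (2 ^ m * ∏ k ∈ Icc 1 m, (y + cos (π * k / (m + 1)))) := by
        rw [← eval_eq_prod, ← eval_eq_prod_add, sq]
    _ = 4 ^ m * ∏ k ∈ Icc 1 m,
          ((y - cos (π * k / (m + 1))) * (y + cos (π * k / (m + 1)))) := by
        rw [mul_mul_mul_comm, ← mul_pow, prod_mul_distrib]
        norm_num
    _ = 4 ^ m * ∏ k ∈ Icc 1 m, (sin (π * k / (m + 1)) ^ 2 - (1 - y ^ 2)) := by
        congr! 2 with k
        rw [sin_sq]
        ring

theorem eval_U_real_sq_eq_add_one_sq_mul_prod (m : ℕ) (y : ℝ) :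
    (Chebyshev.U ℝ m).eval y ^ 2 =
      (m + 1) ^ 2 * ∏ k ∈ Icc 1 m, (1 - 1 / sin (π * k / (m + 1)) ^ 2 * (1 - y ^ 2)) := by
  have eval_one : ((m : ℝ) + 1) ^ 2 = 4 ^ m * ∏ k ∈ Icc 1 m, sin (π * k / (m + 1)) ^ 2 := by
    simpa using eval_U_real_sq_eq_four_pow_mul_prod m 1
  rw [eval_one, mul_assoc, ← prod_mul_distrib, eval_U_real_sq_eq_four_pow_mul_prod]
  congr 1
  refine prod_congr rfl fun k hk ↦ ?_
  obtain ⟨hk₁, hkm⟩ := mem_Icc.mp hk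
  have sin_ne_zero : sin (π * k / (m + 1)) ≠ 0 :=
    mod_cast (sin_pi_mul_div_pos hk₁ (Nat.lt_succ_of_le hkm)).ne'
  field_simp

/-- The polynomial `∏ (1 - csc² (πk/n) X)` over `1 ≤ k < n`, whose coefficients are, up to sign, the
elementary symmetric functions of the numbers `csc² (πk/n)`. -/
noncomputable def cscSqPoly (n : ℕ) : ℝ[X] :=
  ∏ k ∈ Icc 1 (n - 1), (1 - C (1 / sin (π * k / n) ^ 2) * X)

/-- The `j`-th power sum of the numbers `csc² (πk/n)`, `1 ≤ k < n`; the exponent of the cosecant is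
`2 * j`. -/
noncomputable def cscPowerSum (n j : ℕ) : ℝ :=
  ∑ k ∈ Icc 1 (n - 1), 1 / sin (π * k / n) ^ (2 * j)

variable {n : ℕ}

theorem one_sub_T_comp_one_sub_two_mul_X (hn : n ≠ 0) :
    1 - (Chebyshev.T ℝ n).comp (1 - 2 * X) = C (2 * (n : ℝ) ^ 2) * (X * cscSqPoly n) := by
  obtain ⟨m, rfl⟩ := Nat.exists_eq_add_one_of_ne_zero hn
  refine eq_of_infinite_eval_eq _ _ ((Set.Iic_infinite (1 : ℝ)).mono fun x hx ↦ ?_)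
  obtain ⟨y, rfl⟩ : ∃ y, x = 1 - y ^ 2 :=
    ⟨√(1 - x), by rw [sq_sqrt (sub_nonneg.mpr hx), sub_sub_cancel]⟩
  have eval_T : 1 - (Chebyshev.T ℝ (m + 1)).eval (1 - 2 * (1 - y ^ 2)) =
      2 * (1 - y ^ 2) * (Chebyshev.U ℝ m).eval y ^ 2 := by
    have double_angle := congrArg (eval y) (one_sub_T_two_mul (R := ℝ) (m + 1))
    rw [mul_comm 2, Chebyshev.T_mul, Chebyshev.T_two, add_sub_cancel_right] at double_angle
    rw [show 1 - 2 * (1 - y ^ 2) = 2 * y ^ 2 - 1 by ring]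
    simpa using double_angle
  simp only [Set.mem_ofPred_eq, cscSqPoly, eval_sub, eval_one, eval_comp, eval_mul, eval_ofNat,
    eval_X, eval_C, eval_prod, Nat.add_sub_cancel, Nat.cast_add_one]
  rw [eval_T, eval_U_real_sq_eq_add_one_sq_mul_prod]
  ring

theorem coeff_cscSqPoly (hn : n ≠ 0) (j : ℕ) :
    (cscSqPoly n).coeff j =
      ∏ l ∈ range j, 2 * (((l : ℝ) + 1) ^ 2 - n ^ 2) / ((l + 2) * (2 * l + 3)) := by
  have two_mul_sq_ne_zero : 2 * (n : ℝ) ^ 2 ≠ 0 := by positivity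
  have coeff_succ := congrArg (coeff · (j + 1)) (one_sub_T_comp_one_sub_two_mul_X hn)
  simp only [coeff_sub, coeff_T_comp_one_sub_two_mul_X, coeff_C_mul, coeff_X_mul, prod_range_succ',
    coeff_one, Nat.succ_ne_zero, if_false] at coeff_succ
  have shift_index :
      ∏ l ∈ range j, 2 * (((l + 1 : ℕ) : ℝ) ^ 2 - ((n : ℤ) : ℝ) ^ 2) /
          (((l + 1 : ℕ) + 1) * (2 * (l + 1 : ℕ) + 1)) =
        ∏ l ∈ range j, 2 * (((l : ℝ) + 1) ^ 2 - n ^ 2) / ((l + 2) * (2 * l + 3)) := by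
    refine prod_congr rfl fun l _ ↦ ?_
    push_cast
    congr 1
    ring
  apply mul_left_cancel₀ two_mul_sq_ne_zero
  rw [← coeff_succ, shift_index]
  push_cast
  ring

theorem cscPowerSum_succ (n k : ℕ) :
    cscPowerSum n (k + 1) = -((k + 1) * (cscSqPoly n).coeff (k + 1) +
      ∑ j ∈ range k, (cscSqPoly n).coeff (j + 1) * cscPowerSum n (k - j)) := by
  have cscPowerSum_eq (j : ℕ) :
      cscPowerSum n j = ∑ k ∈ Icc 1 (n - 1), (1 / sin (π * k / n) ^ 2) ^ j := by
    simp only [cscPowerSum, div_pow, one_pow, ← pow_mul]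
  simp only [cscPowerSum_eq]
  exact sum_pow_succ_eq_neg_coeff_prod_one_sub_C_mul_X _ _ k

theorem cscPowerSum_one (hn : n ≠ 0) :
    cscPowerSum n 1 = ((n : ℝ) ^ 2 - 1) / 3 := by
  rw [cscPowerSum_succ]
  simp only [sum_range_zero, prod_range_succ, prod_range_zero, coeff_cscSqPoly hn, Nat.reduceAdd]
  push_cast
  ring

theorem cscPowerSum_two (hn : n ≠ 0) :
    cscPowerSum n 2 = ((n : ℝ) ^ 4 + 10 * n ^ 2 - 11) / 45 := by
  rw [cscPowerSum_succ]
  simp only [sum_range_succ, sum_range_zero, prod_range_succ, prod_range_zero, coeff_cscSqPoly hn,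
    Nat.reduceAdd, tsub_zero, cscPowerSum_one hn]
  push_cast
  ring

theorem cscPowerSum_three (hn : n ≠ 0) :
    cscPowerSum n 3 = (2 * (n : ℝ) ^ 6 + 21 * n ^ 4 + 168 * n ^ 2 - 191) / 945 := by
  rw [cscPowerSum_succ]
  simp only [sum_range_succ, sum_range_zero, prod_range_succ, prod_range_zero, coeff_cscSqPoly hn,
    Nat.reduceAdd, Nat.reduceSub, tsub_zero, cscPowerSum_one hn, cscPowerSum_two hn]
  push_cast
  ring

theorem cscPowerSum_four (hn : n ≠ 0) :
    cscPowerSum n 4 =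
      (3 * (n : ℝ) ^ 8 + 40 * n ^ 6 + 294 * n ^ 4 + 2160 * n ^ 2 - 2497) / 14175 := by
  rw [cscPowerSum_succ]
  simp only [sum_range_succ, sum_range_zero, prod_range_succ, prod_range_zero, coeff_cscSqPoly hn,
    Nat.reduceAdd, Nat.reduceSub, tsub_zero, cscPowerSum_one hn, cscPowerSum_two hn,
    cscPowerSum_three hn]
  push_cast
  ring

theorem cscPowerSum_five (hn : n ≠ 0) :
    cscPowerSum n 5 =
      (2 * (n : ℝ) ^ 10 + 33 * n ^ 8 + 286 * n ^ 6 + 1804 * n ^ 4 +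
        12672 * n ^ 2 - 14797) / 93555 := by
  rw [cscPowerSum_succ]
  simp only [sum_range_succ, sum_range_zero, prod_range_succ, prod_range_zero, coeff_cscSqPoly hn,
    Nat.reduceAdd, Nat.reduceSub, tsub_zero, cscPowerSum_one hn, cscPowerSum_two hn,
    cscPowerSum_three hn, cscPowerSum_four hn]
  push_cast
  ring

theorem cscPowerSum_six (hn : n ≠ 0) :
    cscPowerSum n 6 =
      (1382 * (n : ℝ) ^ 12 + 27300 * n ^ 10 + 279279 * n ^ 8 +
        1987700 * n ^ 6 + 11507496 * n ^ 4 + 78624000 * n ^ 2 - 92427157) / 638512875 := by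
  rw [cscPowerSum_succ]
  simp only [sum_range_succ, sum_range_zero, prod_range_succ, prod_range_zero, coeff_cscSqPoly hn,
    Nat.reduceAdd, Nat.reduceSub, tsub_zero, cscPowerSum_one hn, cscPowerSum_two hn,
    cscPowerSum_three hn, cscPowerSum_four hn, cscPowerSum_five hn]
  push_cast
  ring

theorem cscPowerSum_seven (hn : n ≠ 0) :
    cscPowerSum n 7 =
      (60 * (n : ℝ) ^ 14 + 1382 * n ^ 12 + 16380 * n ^ 10 + 133419 * n ^ 8 +
        846560 * n ^ 6 + 4638816 * n ^ 4 + 31104000 * n ^ 2 - 36740617) / 273648375 := by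
  rw [cscPowerSum_succ]
  simp only [sum_range_succ, sum_range_zero, prod_range_succ, prod_range_zero, coeff_cscSqPoly hn,
    Nat.reduceAdd, Nat.reduceSub, tsub_zero, cscPowerSum_one hn, cscPowerSum_two hn,
    cscPowerSum_three hn, cscPowerSum_four hn, cscPowerSum_five hn, cscPowerSum_six hn]
  push_cast
  ring

theorem cscPowerSum_eight (hn : n ≠ 0) :
    cscPowerSum n 8 =
      (10851 * (n : ℝ) ^ 16 + 285600 * n ^ 14 + 3853016 * n ^ 12 +
        35536800 * n ^ 10 + 252498246 * n ^ 8 + 1485473600 * n ^ 6 +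
        7834021056 * n ^ 4 + 51819264000 * n ^ 2 - 61430943169) / 488462349375 := by
  rw [cscPowerSum_succ]
  simp only [sum_range_succ, sum_range_zero, prod_range_succ, prod_range_zero, coeff_cscSqPoly hn,
    Nat.reduceAdd, Nat.reduceSub, tsub_zero, cscPowerSum_one hn, cscPowerSum_two hn,
    cscPowerSum_three hn, cscPowerSum_four hn, cscPowerSum_five hn, cscPowerSum_six hn,
    cscPowerSum_seven hn]
  push_cast
  ring

end CscPowerSum

theorem stmt_14_general {n : ℕ} (hn : n ≠ 0) :
    ∑ θ ∈ Finset.Icc 1 (n - 1), 1 / sin (π * θ / n) ^ 16 =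
      (3617 / 162820783125) * (n : ℝ) ^ 16 + (32 / 54729675) * n ^ 14 +
        (226648 / 28733079375) * n ^ 12 + (2144 / 29469825) * n ^ 10 +
        (4946 / 9568125) * n ^ 8 + (268864 / 88409475) * n ^ 6 +
        (17067584 / 1064188125) * n ^ 4 + (2048 / 19305) * n ^ 2 -
        61430943169 / 488462349375 := by
  change CscPowerSum.cscPowerSum n 8 = _
  rw [CscPowerSum.cscPowerSum_eight hn]
  ring

theorem stmt_14 (p : ℕ) (hp : p.Prime) (hodd : Odd p) (hp16 : 16 < p) :
    ((p : ℝ) ^ 8 / 2 ^ 17) * ∑ θ ∈ Finset.Icc 1 (p - 1), 1 / Real.sin (π * θ / p) ^ 16 =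
      (1 / 131072) * (p : ℝ) ^ 8 * ((3617 / 162820783125) * (p : ℝ) ^ 16 +
        (32 / 54729675) * p ^ 14 + (226648 / 28733079375) * p ^ 12 +
        (2144 / 29469825) * p ^ 10 + (4946 / 9568125) * p ^ 8 +
        (268864 / 88409475) * p ^ 6 + (17067584 / 1064188125) * p ^ 4 +
        (2048 / 19305) * p ^ 2 - 61430943169 / 488462349375) := by
  rw [stmt_14_general hp.ne_zero]
  ring
end
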